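/- The angular factor a of Aronsson's function is real-analytic at every θ ∈ ℝ ∖ πℤ; in particular a is real-analytic at θ = π/2 even though the formula involves |tan(θ/2)|^{4/3}. -/

import Mathlib

noncomputable section

/-- The real cube root. -/
def cbrt (x : ℝ) : ℝ :=
  if x < 0 then -((-x) ^ ((1 : ℝ) / 3)) else x ^ ((1 : ℝ) / 3)

open Classical in
/-- The angular factor `a(θ)` of Aronsson's function, with `a(θ) = -1` at odd multiples
of `π`. -/
def aronssonAngle (θ : ℝ) : ℝ :=
  if ∃ k : ℤ, θ = (2 * (k : ℝ) + 1) * Real.pi then -1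
  else
    cbrt (Real.cos θ * (1 - |Real.tan (θ / 2)| ^ ((4 : ℝ) / 3)) ^ 2 /
      (1 + |Real.tan (θ / 2)| ^ ((4 : ℝ) / 3) + |Real.tan (θ / 2)| ^ ((8 : ℝ) / 3)))

lemma cbrt_cube_mul (x y : ℝ) (hy : 0 < y) : cbrt (x ^ 3 * y) = x * y ^ ((1 : ℝ) / 3) := by
  have key : ∀ z : ℝ, 0 ≤ z → (z ^ 3 * y) ^ ((1 : ℝ) / 3) = z * y ^ ((1 : ℝ) / 3) := by
    intro z hz
    rw [Real.mul_rpow (by positivity) hy.le, ← Real.rpow_natCast, ← Real.rpow_mul hz]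
    norm_num
  unfold cbrt
  rcases lt_or_ge x 0 with hx | hx
  · have h3 : x ^ 3 < 0 := Odd.pow_neg (by decide) hx
    rw [if_pos (mul_neg_of_neg_of_pos h3 hy)]
    have := key (-x) (by linarith)
    rw [show -(x ^ 3 * y) = (-x) ^ 3 * y by ring, this]
    ring
  · rw [if_neg (not_lt.mpr (by positivity)), key x hx]

lemma analyticAt_rpow_third {f : ℝ → ℝ} {x : ℝ} (hf : AnalyticAt ℝ f x) (hx : 0 < f x) :
    AnalyticAt ℝ (fun y => f y ^ ((1 : ℝ) / 3)) x := by
  have h1 : AnalyticAt ℝ (fun y => Real.exp (Real.log (f y) * ((1 : ℝ) / 3))) x :=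
    ((hf.log hx).mul analyticAt_const).rexp'
  refine h1.congr ?_
  filter_upwards [hf.continuousAt.eventually (lt_mem_nhds hx)] with y hy
  rw [Real.rpow_def_of_pos hy]

lemma aronsson_eq (θ : ℝ) (h : Real.sin θ ≠ 0) :
    aronssonAngle θ = (1 - (Real.tan (θ / 2) ^ 2) ^ ((1 : ℝ) / 3)) *
      ((1 + (Real.tan (θ / 2) ^ 2) ^ ((1 : ℝ) / 3)) /
        (1 - (Real.tan (θ / 2) ^ 2) ^ ((1 : ℝ) / 3) +
          ((Real.tan (θ / 2) ^ 2) ^ ((1 : ℝ) / 3)) ^ 2) ^ 2) ^ ((1 : ℝ) / 3) := by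
  have hs2 : Real.sin θ = 2 * Real.sin (θ / 2) * Real.cos (θ / 2) := by
    rw [← Real.sin_two_mul]; congr 1; ring
  have hc : Real.cos (θ / 2) ≠ 0 := by
    intro h0; apply h; rw [hs2, h0, mul_zero]
  unfold aronssonAngle
  rw [if_neg]
  swap
  · rintro ⟨k, hk⟩
    apply h
    rw [hk]
    have := Real.sin_int_mul_pi (2 * k + 1)
    push_cast at this
    exact this
  set t := Real.tan (θ / 2) with ht
  set s := (t ^ 2) ^ ((1 : ℝ) / 3) with hs
  have hs0 : 0 ≤ s := by positivity
  have hs3 : s ^ 3 = t ^ 2 := by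
    rw [hs, ← Real.rpow_natCast, ← Real.rpow_mul (by positivity)]
    norm_num
  have hsabs : s = |t| ^ ((2 : ℝ) / 3) := by
    rw [hs, ← sq_abs, ← Real.rpow_natCast, ← Real.rpow_mul (abs_nonneg _)]
    norm_num
  have h4 : |t| ^ ((4 : ℝ) / 3) = s ^ 2 := by
    rw [hsabs, ← Real.rpow_natCast, ← Real.rpow_mul (abs_nonneg _)]
    norm_num
  have h8 : |t| ^ ((8 : ℝ) / 3) = s ^ 4 := by
    rw [hsabs, ← Real.rpow_natCast, ← Real.rpow_mul (abs_nonneg _)]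
    norm_num
  have hcos : Real.cos θ = (1 - s ^ 3) / (1 + s ^ 3) := by
    rw [hs3, ht, Real.tan_eq_sin_div_cos]
    have h1 : Real.cos θ = 2 * Real.cos (θ / 2) ^ 2 - 1 := by
      rw [← Real.cos_two_mul]; congr 1; ring
    have h2 := Real.sin_sq_add_cos_sq (θ / 2)
    have h3 : 1 + (Real.sin (θ / 2) / Real.cos (θ / 2)) ^ 2 ≠ 0 := by positivity
    rw [eq_div_iff h3, h1]
    field_simp
    rw [show Real.sin (θ / 2) ^ 2 = 1 - Real.cos (θ / 2) ^ 2 by linarith]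
    ring
  have hq : 0 < 1 - s + s ^ 2 := by nlinarith [sq_nonneg (s - 1 / 2)]
  rw [← cbrt_cube_mul _ _ (by positivity), h4, h8, hcos]
  congr 1
  have h5 : 1 + s ^ 3 ≠ 0 := by positivity
  have h6 : 1 + s ^ 2 + s ^ 4 ≠ 0 := by positivity
  have h7 : (1 - s + s ^ 2) ^ 2 ≠ 0 := by positivity
  rw [div_mul_eq_mul_div, div_div, mul_div_assoc', div_eq_div_iff (mul_ne_zero h5 h6) h7]
  ring

/-- The angular factor of Aronsson's function is real-analytic at every `θ ∉ πℤ`. -/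
theorem stmt14 :
    ∀ θ : ℝ, (∀ k : ℤ, θ ≠ (k : ℝ) * Real.pi) → AnalyticAt ℝ aronssonAngle θ := by
  intro θ hθ
  have h : Real.sin θ ≠ 0 := by
    intro h0
    obtain ⟨k, hk⟩ := Real.sin_eq_zero_iff.mp h0
    exact hθ k hk.symm
  have hev : ∀ᶠ x in nhds θ, Real.sin x ≠ 0 :=
    Real.continuous_sin.continuousAt.eventually_ne h
  have hs2 : Real.sin θ = 2 * Real.sin (θ / 2) * Real.cos (θ / 2) := by
    rw [← Real.sin_two_mul]; congr 1; ring
  have hc : Real.cos (θ / 2) ≠ 0 := by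
    intro h0; apply h; rw [hs2, h0, mul_zero]
  have hsn : Real.sin (θ / 2) ≠ 0 := by
    intro h0; apply h; rw [hs2, h0]; ring
  have htan : AnalyticAt ℝ (fun x : ℝ => Real.tan (x / 2)) θ := by
    simp only [Real.tan_eq_sin_div_cos]
    have hd : AnalyticAt ℝ (fun x : ℝ => x / 2) θ := by fun_prop (disch := norm_num)
    exact (Real.analyticAt_sin.fun_comp hd).div (Real.analyticAt_cos.fun_comp hd) hc
  have ht0 : Real.tan (θ / 2) ≠ 0 := by
    rw [Real.tan_eq_sin_div_cos]; exact div_ne_zero hsn hc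
  have hsA : AnalyticAt ℝ (fun x : ℝ => (Real.tan (x / 2) ^ 2) ^ ((1 : ℝ) / 3)) θ :=
    analyticAt_rpow_third (htan.fun_pow 2) (by positivity)
  have hs0 : 0 ≤ (Real.tan (θ / 2) ^ 2) ^ ((1 : ℝ) / 3) := by positivity
  have hq : 0 < 1 - (Real.tan (θ / 2) ^ 2) ^ ((1 : ℝ) / 3) +
      ((Real.tan (θ / 2) ^ 2) ^ ((1 : ℝ) / 3)) ^ 2 := by
    nlinarith [sq_nonneg ((Real.tan (θ / 2) ^ 2) ^ ((1 : ℝ) / 3) - 1 / 2)]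
  refine AnalyticAt.congr ?_ (hev.mono fun x hx => (aronsson_eq x hx).symm)
  refine (analyticAt_const.sub hsA).mul (analyticAt_rpow_third ?_ (by positivity))
  exact (analyticAt_const.add hsA).div
    (((analyticAt_const.sub hsA).add (hsA.pow 2)).pow 2) (by positivity)

end
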